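/- For any convex body A in ℝ² there exist a real number a ∈ [0,1] and an invertible affine map T : ℝ² → ℝ² such that L_a ⊆ T(A) ⊆ U_a. -/

import Mathlib

/-- A convex body in the plane: compact, convex, with nonempty interior. -/
def IsConvexBody (A : Set (ℝ × ℝ)) : Prop :=
  Convex ℝ A ∧ IsCompact A ∧ (interior A).Nonempty

/-- The 7-gon `L_a` with vertices (0, 2a/(1+a)), (±1,1), (±2,2), (±1,3). -/
noncomputable def L (a : ℝ) : Set (ℝ × ℝ) :=
  convexHull ℝ {((0 : ℝ), 2 * a / (1 + a)), (1, 1), (-1, 1), (2, 2), (-2, 2), (1, 3), (-1, 3)}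

/-- The polygon `U_a` from Definition 2.1. -/
noncomputable def U (a : ℝ) : Set (ℝ × ℝ) :=
  if a < 1 / 2 then
    convexHull ℝ {((a : ℝ), a), (-a, a), (2 + a, 2 - a), (-(2 + a), 2 - a),
      (3 - a, 3 - a), (-(3 - a), 3 - a), (3 - 2 * a, 3), (-(3 - 2 * a), 3),
      (a, 4 - a), (-a, 4 - a)}
  else
    convexHull ℝ {((a : ℝ), a), (-a, a), (3 - 2 * a, 1), (-(3 - 2 * a), 1),
      (3 - a, 1 + a), (-(3 - a), 1 + a), (3 - a, 3 - a), (-(3 - a), 3 - a),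
      (3 - 2 * a, 3), (-(3 - 2 * a), 3), (a, 4 - a), (-a, 4 - a)}

/-!
For each direction `u`, consider the hexagons inscribed in `A` with two equal sides parallel to `u`
and a chord midway between them, parallel to `u` and twice as long, and choose one for which the
parallelogram spanned by the two sides has maximal area. Such a hexagon is affinely regular once its
skew, the displacement of the middle chord, vanishes. For a fixed `u` the optimal hexagons form a
convex set, so over the circle of directions they form a connected space, on which the skew is
continuous; since reversing `u` negates the skew, it vanishes somewhere. After an affine
normalisation of that hexagon, optimality forces `A` into the star formed by extending its edges.
Rotate the hexagon so that the edge beyond which `A` protrudes furthest is at the bottom; the height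
of the lowest point of `A` is then the required `a`.
-/

open Filter Metric Topology

/-- The determinant of two plane vectors, i.e. their signed parallelogram area. -/
def cross (v w : ℝ × ℝ) : ℝ := v.1 * w.2 - v.2 * w.1

lemma cross_smul_add_smul_right (a b : ℝ) (v w : ℝ × ℝ) :
    cross v (a • v + b • w) = b * cross v w := by
  simp only [cross, Prod.fst_add, Prod.snd_add, Prod.smul_fst, Prod.smul_snd, smul_eq_mul]
  ring

lemma cross_smul_add_smul_left (a b : ℝ) (v w : ℝ × ℝ) :
    cross (a • v + b • w) w = a * cross v w := by
  simp only [cross, Prod.fst_add, Prod.snd_add, Prod.smul_fst, Prod.smul_snd, smul_eq_mul]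
  ring

lemma injective_coprod_toSpanSingleton {v w : ℝ × ℝ} (hvw : cross v w ≠ 0) :
    Function.Injective ((LinearMap.toSpanSingleton ℝ (ℝ × ℝ) v).coprod
      (LinearMap.toSpanSingleton ℝ (ℝ × ℝ) w)) := by
  refine (injective_iff_map_eq_zero _).2 fun p hp => ?_
  replace hp : p.1 • v + p.2 • w = 0 := hp
  have hfst : p.1 * cross v w = 0 := by
    rw [← cross_smul_add_smul_left p.1 p.2, hp]; simp [cross]
  have hsnd : p.2 * cross v w = 0 := by
    rw [← cross_smul_add_smul_right p.1 p.2, hp]; simp [cross]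
  exact Prod.ext ((mul_eq_zero_iff_right hvw).1 hfst) ((mul_eq_zero_iff_right hvw).1 hsnd)

/-- The affine automorphism of the plane sending the standard frame to the frame with origin `o`
and basis vectors `v`, `w`. -/
noncomputable def frameEquiv (o v w : ℝ × ℝ) (hvw : cross v w ≠ 0) : ℝ × ℝ ≃ᵃ[ℝ] ℝ × ℝ :=
  (LinearEquiv.ofInjectiveEndo _ (injective_coprod_toSpanSingleton hvw)).toAffineEquiv.trans
    (AffineEquiv.constVAdd ℝ (ℝ × ℝ) o)

lemma frameEquiv_apply (o v w : ℝ × ℝ) (hvw : cross v w ≠ 0) (p : ℝ × ℝ) :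
    frameEquiv o v w hvw p = o + (p.1 • v + p.2 • w) := rfl

lemma quasiconcaveOn_mul_nonneg :
    QuasiconcaveOn ℝ {p : ℝ × ℝ | 0 ≤ p.1 ∧ 0 ≤ p.2} (fun p => p.1 * p.2) := by
  rintro v ⟨p, q⟩ ⟨⟨hp, hq⟩, hpq⟩ ⟨p', q'⟩ ⟨⟨hp', hq'⟩, hpq'⟩ l m hl hm hlm
  simp only [Prod.smul_mk, Prod.mk_add_mk, smul_eq_mul, Set.mem_ofPred_eq] at *
  refine ⟨⟨by positivity, by positivity⟩, ?_⟩
  rcases le_total v 0 with hv | hv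
  · exact hv.trans (by positivity)
  have amgm : 2 * v ≤ p * q' + p' * q := by
    refine le_of_sq_le_sq ?_ (by positivity)
    nlinarith [mul_le_mul hpq hpq' hv (hv.trans hpq), sq_nonneg (p * q' - p' * q)]
  calc v = l ^ 2 * v + m ^ 2 * v + l * m * (2 * v) := by
        rw [eq_sub_of_add_eq' hlm]
        ring
    _ ≤ l ^ 2 * (p * q) + m ^ 2 * (p' * q') + l * m * (p * q' + p' * q) := by gcongr
    _ = (l * p + m * p') * (l * q + m * q') := by ring

lemma isConnected_of_isConnected_fibers {X Y : Type*} [TopologicalSpace X] [TopologicalSpace Y]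
    [T2Space Y] {f : X → Y} {s : Set X} (hs : IsCompact s) (hf : ContinuousOn f s)
    (himage : IsConnected (f '' s)) (hfiber : ∀ y, IsPreconnected (s ∩ f ⁻¹' {y})) :
    IsConnected s := by
  have : CompactSpace s := isCompact_iff_compactSpace.1 hs
  have : ConnectedSpace (f '' s) := isConnected_iff_connectedSpace.1 himage
  let g : s → f '' s := (Set.mapsTo_image f s).restrict
  have hg : Continuous g := hf.mapsToRestrict _
  have hsurj : Function.Surjective g := Set.surjective_mapsTo_image_restrict f s
  have hconn : ∀ y, IsConnected (g ⁻¹' {y}) := fun y => by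
    refine ⟨(Set.singleton_nonempty y).preimage hsurj, ?_⟩
    rw [← IsInducing.subtypeVal.isPreconnected_image]
    convert hfiber y using 1
    ext x
    simp [g, Subtype.ext_iff, and_comm]
  have := (hg.isClosedMap.isQuotientMap hg hsurj).isCoinducing.isConnected_preimage_of_isClosed
    hconn isClosed_univ isConnected_univ
  rw [Set.preimage_univ] at this
  simpa using isConnected_iff_connectedSpace.2 (connectedSpace_iff_univ.2 this)

/-- The parameters `(m, h, r, s)` of the hexagon `hexVertex u`, for a given direction `u`. They live
in a product of real vector spaces so that hexagons can be averaged and topologised. -/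
abbrev HexConfig := (ℝ × ℝ) × (ℝ × ℝ) × ℝ × ℝ

namespace HexConfig

/-- The centre of the parallelogram spanned by the two short sides parallel to the direction. -/
@[simp] abbrev center (c : HexConfig) : ℝ × ℝ := c.1

/-- The vector from the centre to the midpoint of the top side. -/
@[simp] abbrev halfHeight (c : HexConfig) : ℝ × ℝ := c.2.1

/-- Half the length of the top and bottom sides, in units of the direction. -/
@[simp] abbrev halfWidth (c : HexConfig) : ℝ := c.2.2.1

/-- The displacement of the middle chord from the centre, in units of the direction. -/
@[simp] abbrev skew (c : HexConfig) : ℝ := c.2.2.2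

end HexConfig

open HexConfig

/-- The vertices, in cyclic order, of the hexagon with two equal sides parallel to `u` and a chord
halfway between them, parallel to `u` and twice as long. The hexagon is affinely regular exactly
when the skew vanishes. -/
def hexVertex (u : ℝ × ℝ) (c : HexConfig) : Fin 6 → ℝ × ℝ :=
  ![c.center - c.halfHeight + c.halfWidth • u,
    c.center + (c.skew + 2 * c.halfWidth) • u,
    c.center + c.halfHeight + c.halfWidth • u,
    c.center + c.halfHeight - c.halfWidth • u,
    c.center + (c.skew - 2 * c.halfWidth) • u,
    c.center - c.halfHeight - c.halfWidth • u]

/-- A quarter of the signed area of the parallelogram spanned by the two short sides. -/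
def hexArea (u : ℝ × ℝ) (c : HexConfig) : ℝ := c.halfWidth * cross u c.halfHeight

/-- The hexagon with direction `u` and data `c` is inscribed in `A`. -/
def IsInscribed (A : Set (ℝ × ℝ)) (u : ℝ × ℝ) (c : HexConfig) : Prop :=
  0 ≤ c.halfWidth ∧ ∀ k, hexVertex u c k ∈ A

/-- An inscribed hexagon of direction `u` maximising `hexArea` among all of these. -/
def IsOptimal (A : Set (ℝ × ℝ)) (u : ℝ × ℝ) (c : HexConfig) : Prop :=
  IsInscribed A u c ∧ ∀ c', IsInscribed A u c' → hexArea u c' ≤ hexArea u c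

lemma hexVertex_combo (u : ℝ × ℝ) (c c' : HexConfig) (l m : ℝ) (k : Fin 6) :
    hexVertex u (l • c + m • c') k = l • hexVertex u c k + m • hexVertex u c' k := by
  fin_cases k <;> simp [hexVertex] <;> module

lemma hexVertex_point (u p : ℝ × ℝ) (k : Fin 6) : hexVertex u (p, 0, 0, 0) k = p := by
  fin_cases k <;> simp [hexVertex]

lemma continuous_hexVertex (k : Fin 6) :
    Continuous fun q : (ℝ × ℝ) × HexConfig => hexVertex q.1 q.2 k := by
  fin_cases k <;> simp only [hexVertex] <;> dsimp <;> fun_prop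

lemma continuous_hexArea : Continuous fun q : (ℝ × ℝ) × HexConfig => hexArea q.1 q.2 := by
  unfold hexArea cross
  fun_prop

lemma norm_le_of_norm_hexVertex_le {u : ℝ × ℝ} (hu : ‖u‖ = 1) {c : HexConfig} {M : ℝ}
    (h : ∀ k, ‖hexVertex u c k‖ ≤ M) : ‖c‖ ≤ 2 * M := by
  have hM : 0 ≤ M := (norm_nonneg _).trans (h 0)
  have hmid : ∀ i j, ‖(1 / 2 : ℝ) • (hexVertex u c i + hexVertex u c j)‖ ≤ M := fun i j => by
    rw [norm_smul]
    norm_num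
    linarith [norm_add_le (hexVertex u c i) (hexVertex u c j), h i, h j]
  have hdiff : ∀ i j, ‖(1 / 2 : ℝ) • (hexVertex u c i - hexVertex u c j)‖ ≤ M := fun i j => by
    rw [norm_smul]
    norm_num
    linarith [norm_sub_le (hexVertex u c i) (hexVertex u c j), h i, h j]
  have hcenter : ‖c.center‖ ≤ M := by
    convert hmid 0 3 using 2; simp [hexVertex]; module
  have hheight : ‖c.halfHeight‖ ≤ M := by
    convert hdiff 2 0 using 2; simp [hexVertex]; module
  have hwidth : ‖c.halfWidth • u‖ ≤ M := by
    convert hdiff 0 5 using 2; simp [hexVertex]; module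
  have hskew : ‖c.skew • u‖ ≤ M + M := by
    refine le_trans ?_ (norm_sub_le_of_le (hmid 1 4) hcenter)
    apply le_of_eq
    congr 1; simp [hexVertex]; module
  rw [norm_smul, hu, mul_one] at hwidth hskew
  simp only [Prod.norm_def c, Prod.norm_def c.2, Prod.norm_def c.2.2, sup_le_iff]
  refine ⟨?_, ?_, ?_, ?_⟩ <;> linarith

section Opposite

variable {A : Set (ℝ × ℝ)} {u : ℝ × ℝ} {c : HexConfig}

/-- The data of the hexagon `c` with respect to the opposite direction. -/
def HexConfig.opposite (c : HexConfig) : HexConfig :=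
  (c.center, -c.halfHeight, c.halfWidth, -c.skew)

lemma hexVertex_neg_opposite (u : ℝ × ℝ) (c : HexConfig) (k : Fin 6) :
    hexVertex (-u) c.opposite k = hexVertex u c (k + 3) := by
  fin_cases k <;> simp [hexVertex, opposite] <;> module

lemma hexArea_neg_opposite (u : ℝ × ℝ) (c : HexConfig) :
    hexArea (-u) c.opposite = hexArea u c := by
  simp only [hexArea, cross, opposite, halfWidth, halfHeight, Prod.fst_neg, Prod.snd_neg]
  ring

lemma IsInscribed.opposite (h : IsInscribed A u c) : IsInscribed A (-u) c.opposite :=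
  ⟨h.1, fun k => by rw [hexVertex_neg_opposite]; exact h.2 _⟩

lemma IsOptimal.opposite (h : IsOptimal A u c) : IsOptimal A (-u) c.opposite := by
  refine ⟨h.1.opposite, fun c' hc' => ?_⟩
  have hopp := hc'.opposite
  rw [neg_neg] at hopp
  calc hexArea (-u) c' = hexArea u c'.opposite := by
        rw [← hexArea_neg_opposite (-u) c', neg_neg]
    _ ≤ hexArea u c := h.2 _ hopp
    _ = hexArea (-u) c.opposite := (hexArea_neg_opposite u c).symm

end Opposite

section Optimal

variable {A : Set (ℝ × ℝ)} {u : ℝ × ℝ} {c : HexConfig}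

lemma exists_isInscribed_hexArea_pos (hA : (interior A).Nonempty) (hu : u ≠ 0) :
    ∃ c, IsInscribed A u c ∧ 0 < hexArea u c := by
  obtain ⟨p, hp⟩ := hA
  let c : ℝ → HexConfig := fun ε => (p, ε • (-u.2, u.1), ε, 0)
  have hvertex : ∀ k, ∀ᶠ ε in 𝓝 (0 : ℝ), hexVertex u (c ε) k ∈ A := fun k => by
    have hcont : Continuous fun ε => hexVertex u (c ε) k :=
      (continuous_hexVertex k).comp (by fun_prop : Continuous fun ε => (u, c ε))
    refine hcont.continuousAt.eventually_mem ?_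
    convert mem_interior_iff_mem_nhds.1 hp
    simp only [c, zero_smul]
    exact hexVertex_point u p k
  have hall : ∀ᶠ ε in 𝓝[>] (0 : ℝ), ∀ k, hexVertex u (c ε) k ∈ A :=
    (eventually_all.2 hvertex).filter_mono nhdsWithin_le_nhds
  obtain ⟨ε, hmem, hε⟩ := (hall.and self_mem_nhdsWithin).exists
  have hε : 0 < ε := hε
  refine ⟨c ε, ⟨hε.le, hmem⟩, ?_⟩
  have hnorm : 0 < u.1 ^ 2 + u.2 ^ 2 := by
    by_contra! h
    exact hu (Prod.ext (by simp; nlinarith) (by simp; nlinarith))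
  calc 0 < ε ^ 2 * (u.1 ^ 2 + u.2 ^ 2) := by positivity
    _ = hexArea u (c ε) := by simp [hexArea, cross, c]; ring

lemma IsOptimal.pos (hA : (interior A).Nonempty) (hu : u ≠ 0) (h : IsOptimal A u c) :
    0 < c.halfWidth ∧ 0 < cross u c.halfHeight := by
  obtain ⟨c', hc', hpos⟩ := exists_isInscribed_hexArea_pos hA hu
  have harea : 0 < c.halfWidth * cross u c.halfHeight := hpos.trans_le (h.2 c' hc')
  have hheight := pos_of_mul_pos_right harea h.1.1
  exact ⟨pos_of_mul_pos_left harea hheight.le, hheight⟩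

/-- Optimality only needs to be tested against hexagons in the interior, by shrinking towards an
interior point. -/
lemma isOptimal_iff_forall_interior (hA : Convex ℝ A) (hA' : (interior A).Nonempty) :
    IsOptimal A u c ↔ IsInscribed A u c ∧
      ∀ c', IsInscribed (interior A) u c' → hexArea u c' ≤ hexArea u c := by
  refine ⟨fun h => ⟨h.1, fun c' hc' => h.2 c' ⟨hc'.1, fun k => interior_subset (hc'.2 k)⟩⟩,
    fun h => ⟨h.1, fun c' hc' => ?_⟩⟩
  obtain ⟨p, hp⟩ := hA'
  have hshrink : ∀ᶠ ε in 𝓝[>] (0 : ℝ), (1 - ε) ^ 2 * hexArea u c' ≤ hexArea u c := by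
    filter_upwards [Ioo_mem_nhdsGT zero_lt_one] with ε ⟨hε0, hε1⟩
    calc (1 - ε) ^ 2 * hexArea u c'
        = hexArea u ((1 - ε) • c' + ε • ((p, 0, 0, 0) : HexConfig)) := by
          simp [hexArea, cross]; ring
      _ ≤ hexArea u c := h.2 _ ⟨?_, fun k => ?_⟩
    · simpa using mul_nonneg (sub_nonneg.2 hε1.le) hc'.1
    · rw [hexVertex_combo, hexVertex_point]
      exact hA.combo_self_interior_mem_interior (hc'.2 k) hp (sub_nonneg.2 hε1.le) hε0 (by ring)
  have hlim : Tendsto (fun ε : ℝ => (1 - ε) ^ 2 * hexArea u c') (𝓝[>] 0) (𝓝 (hexArea u c')) := by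
    refine Tendsto.mono_left ?_ nhdsWithin_le_nhds
    have hcont : Continuous fun ε : ℝ => (1 - ε) ^ 2 * hexArea u c' := by fun_prop
    convert hcont.tendsto 0 using 2
    ring
  exact le_of_tendsto hlim hshrink

lemma isClosed_setOf_isInscribed (hA : IsClosed A) :
    IsClosed {q : (ℝ × ℝ) × HexConfig | IsInscribed A q.1 q.2} := by
  simp only [IsInscribed, Set.ofPred_and, Set.ofPred_forall]
  exact (isClosed_le (by fun_prop) (by fun_prop)).inter
    (isClosed_iInter fun k => hA.preimage (continuous_hexVertex k))

lemma isClosed_setOf_isOptimal (hA : IsConvexBody A) :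
    IsClosed {q : (ℝ × ℝ) × HexConfig | IsOptimal A q.1 q.2} := by
  obtain ⟨hconv, hcomp, hint⟩ := hA
  simp only [isOptimal_iff_forall_interior hconv hint, Set.ofPred_and, Set.ofPred_forall]
  refine (isClosed_setOf_isInscribed hcomp.isClosed).inter (isClosed_iInter fun c' => ?_)
  have hpair : Continuous fun q : (ℝ × ℝ) × HexConfig => (q.1, c') := by fun_prop
  simp only [imp_iff_not_or, Set.ofPred_or]
  refine IsClosed.union ?_ (isClosed_le (continuous_hexArea.comp hpair) continuous_hexArea)
  rw [← Set.compl_ofPred, isClosed_compl_iff]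
  simp only [IsInscribed, Set.ofPred_and, Set.ofPred_forall]
  exact isOpen_const.inter (isOpen_iInter_of_finite fun k =>
    isOpen_interior.preimage ((continuous_hexVertex k).comp hpair))

lemma exists_forall_isInscribed_norm_le (hA : Bornology.IsBounded A) :
    ∃ M, ∀ u c, ‖u‖ = 1 → IsInscribed A u c → ‖c‖ ≤ M := by
  obtain ⟨M, hM⟩ := hA.exists_norm_le
  exact ⟨2 * M, fun u c hu hc => norm_le_of_norm_hexVertex_le hu fun k => hM _ (hc.2 k)⟩

lemma exists_isOptimal (hA : IsConvexBody A) (hu : ‖u‖ = 1) : ∃ c, IsOptimal A u c := by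
  obtain ⟨-, hcomp, hint⟩ := hA
  obtain ⟨M, hM⟩ := exists_forall_isInscribed_norm_le hcomp.isBounded
  have hpair : Continuous fun c : HexConfig => (u, c) := by fun_prop
  have hcompact : IsCompact {c | IsInscribed A u c} :=
    isCompact_of_isClosed_isBounded ((isClosed_setOf_isInscribed hcomp.isClosed).preimage hpair)
      (isBounded_iff_forall_norm_le.2 ⟨M, fun c hc => hM u c hu hc⟩)
  obtain ⟨c₀, hc₀, -⟩ := exists_isInscribed_hexArea_pos hint (u := u) (by rintro rfl; simp at hu)
  obtain ⟨c, hc, hmax⟩ := hcompact.exists_isMaxOn ⟨c₀, hc₀⟩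
    (continuous_hexArea.comp hpair).continuousOn
  exact ⟨c, hc, fun c' hc' => hmax hc'⟩

lemma convex_setOf_isOptimal (hA : Convex ℝ A) (hA' : (interior A).Nonempty) (hu : u ≠ 0) :
    Convex ℝ {c | IsOptimal A u c} := by
  intro c₁ h₁ c₂ h₂ l m hl hm hlm
  obtain ⟨hr₁, hH₁⟩ := h₁.pos hA' hu
  obtain ⟨hr₂, hH₂⟩ := h₂.pos hA' hu
  have harea := (quasiconcaveOn_mul_nonneg (hexArea u c₁)
    (x := (c₁.halfWidth, cross u c₁.halfHeight)) ⟨⟨hr₁.le, hH₁.le⟩, le_rfl⟩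
    (y := (c₂.halfWidth, cross u c₂.halfHeight)) ⟨⟨hr₂.le, hH₂.le⟩, h₂.2 _ h₁.1⟩ hl hm hlm).2
  refine ⟨⟨?_, fun k => ?_⟩, fun c' hc' => (h₁.2 c' hc').trans (harea.trans_eq ?_)⟩
  · exact add_nonneg (mul_nonneg hl hr₁.le) (mul_nonneg hm hr₂.le)
  · rw [hexVertex_combo]
    exact hA (h₁.1.2 k) (h₂.1.2 k) hl hm hlm
  · simp only [hexArea, cross, halfWidth, halfHeight, Prod.fst_add, Prod.snd_add, Prod.smul_fst,
      Prod.smul_snd, smul_eq_mul]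
    ring

/-- The space of optimal hexagons fibres over the circle of directions with convex fibres. -/
lemma isConnected_setOf_isOptimal (hA : IsConvexBody A) :
    IsConnected {q : (ℝ × ℝ) × HexConfig | ‖q.1‖ = 1 ∧ IsOptimal A q.1 q.2} := by
  obtain ⟨M, hM⟩ := exists_forall_isInscribed_norm_le hA.2.1.isBounded
  have himage : Prod.fst '' {q : (ℝ × ℝ) × HexConfig | ‖q.1‖ = 1 ∧ IsOptimal A q.1 q.2} =
      sphere 0 1 := by
    ext u
    rw [mem_sphere_zero_iff_norm]
    refine ⟨?_, fun hu => ?_⟩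
    · rintro ⟨q, hq, rfl⟩; exact hq.1
    · obtain ⟨c, hc⟩ := exists_isOptimal hA hu
      exact ⟨(u, c), ⟨hu, hc⟩, rfl⟩
  have hcompact : IsCompact {q : (ℝ × ℝ) × HexConfig | ‖q.1‖ = 1 ∧ IsOptimal A q.1 q.2} := by
    refine isCompact_of_isClosed_isBounded
      ((isClosed_eq (by fun_prop) (by fun_prop)).inter (isClosed_setOf_isOptimal hA))
      (isBounded_iff_forall_norm_le.2 ⟨max 1 M, fun q hq => ?_⟩)
    exact max_le_max hq.1.le (hM _ _ hq.1 hq.2.1)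
  refine isConnected_of_isConnected_fibers hcompact continuous_fst.continuousOn ?_ fun u => ?_
  · rw [himage]
    exact isConnected_sphere (by simp; norm_num) 0 zero_le_one
  · rcases eq_or_ne ‖u‖ 1 with hu | hu
    · have hfiber := (convex_setOf_isOptimal hA.1 hA.2.2 (u := u)
        (by rintro rfl; simp at hu)).isPreconnected.image (Prod.mk u) (by fun_prop)
      convert hfiber using 1
      ext ⟨v, c⟩
      simp only [Set.mem_inter_iff, Set.mem_ofPred_eq, Set.mem_preimage, Set.mem_singleton_iff,
        Set.mem_image, Prod.mk.injEq]
      grind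
    · convert isPreconnected_empty
      refine Set.eq_empty_of_forall_notMem ?_
      rintro q ⟨hq, rfl⟩
      exact hu hq.1

lemma exists_isOptimal_skew_eq_zero (hA : IsConvexBody A) :
    ∃ u c, u ≠ 0 ∧ IsOptimal A u c ∧ c.skew = 0 := by
  have hconn := isConnected_setOf_isOptimal hA
  obtain ⟨⟨u, c⟩, hu, hc⟩ := hconn.nonempty
  have hu' : ‖-u‖ = 1 := by rwa [norm_neg]
  have hskew : ContinuousOn (fun q : (ℝ × ℝ) × HexConfig => q.2.skew)
      {q | ‖q.1‖ = 1 ∧ IsOptimal A q.1 q.2} := by fun_prop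
  have hzero : ∃ q : (ℝ × ℝ) × HexConfig, (‖q.1‖ = 1 ∧ IsOptimal A q.1 q.2) ∧ q.2.skew = 0 := by
    rcases le_total c.skew 0 with h | h
    · exact hconn.isPreconnected.intermediate_value (a := (u, c)) (b := (-u, c.opposite))
        ⟨hu, hc⟩ ⟨hu', hc.opposite⟩ hskew ⟨h, neg_nonneg.2 h⟩
    · exact hconn.isPreconnected.intermediate_value (a := (-u, c.opposite)) (b := (u, c))
        ⟨hu', hc.opposite⟩ ⟨hu, hc⟩ hskew ⟨neg_nonpos.2 h, h⟩
  obtain ⟨⟨v, c'⟩, ⟨hv, hc'⟩, hskew'⟩ := hzero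
  exact ⟨v, c', norm_ne_zero_iff.1 (by simp [hv]), hc', hskew'⟩

end Optimal

section PlaneConvexity

variable {B : Set (ℝ × ℝ)} {x y x₁ y₁ x₂ y₂ : ℝ}

lemma mem_of_eq_add_mul_sub (hB : Convex ℝ B) (h₁ : (x₁, y₁) ∈ B) (h₂ : (x₂, y₂) ∈ B) {t : ℝ}
    (ht : t ∈ Set.Icc 0 1) (hx : x = x₁ + t * (x₂ - x₁)) (hy : y = y₁ + t * (y₂ - y₁)) :
    (x, y) ∈ B := by
  convert hB.add_smul_sub_mem h₁ h₂ ht using 1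
  simp [hx, hy]

lemma mem_of_mem_Icc (hB : Convex ℝ B) (h₁ : (x₁, y) ∈ B) (h₂ : (x₂, y) ∈ B)
    (hx : x ∈ Set.Icc x₁ x₂) : (x, y) ∈ B :=
  (hB.affine_preimage ((AffineMap.id ℝ ℝ).prod (AffineMap.const ℝ ℝ y))).ordConnected.out h₁ h₂ hx

lemma mem_convexHull_of_mem_trapezoid (x₁ y₁ x₂ y₂ : ℝ) (hlt : y₁ < y₂)
    (hy : y ∈ Set.Icc y₁ y₂) (hx : |x| * (y₂ - y₁) ≤ x₁ * (y₂ - y) + x₂ * (y - y₁))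
    (hr₁ : (x₁, y₁) ∈ B := by simp) (hl₁ : (-x₁, y₁) ∈ B := by simp)
    (hr₂ : (x₂, y₂) ∈ B := by simp) (hl₂ : (-x₂, y₂) ∈ B := by simp) :
    (x, y) ∈ convexHull ℝ B := by
  have hB := convex_convexHull ℝ B
  have hsub := subset_convexHull ℝ B
  have hpos : 0 < y₂ - y₁ := sub_pos.2 hlt
  set t := (y - y₁) / (y₂ - y₁) with ht_def
  have ht : t ∈ Set.Icc 0 1 :=
    ⟨div_nonneg (sub_nonneg.2 hy.1) hpos.le, (div_le_one hpos).2 (by linarith [hy.2])⟩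
  have hty : y = y₁ + t * (y₂ - y₁) := by rw [ht_def]; field_simp; ring
  have habs : |x| ≤ x₁ + t * (x₂ - x₁) := by
    refine le_of_mul_le_mul_right (hx.trans_eq ?_) hpos
    rw [ht_def]
    field_simp
    ring
  exact mem_of_mem_Icc hB (mem_of_eq_add_mul_sub hB (hsub hl₁) (hsub hl₂) ht rfl hty)
    (mem_of_eq_add_mul_sub hB (hsub hr₁) (hsub hr₂) ht rfl hty)
    ⟨by linarith [neg_abs_le x], (le_abs_self x).trans habs⟩

lemma exists_chord_below (hB : Convex ℝ B) (h₁ : (x₁, y₁) ∈ B) (h₂ : (x₂, y₁) ∈ B)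
    (h : (x, y) ∈ B) (hy : y < y₁) {w : ℝ} (hw : w ∈ Set.Ico 0 (x₂ - x₁)) :
    ∀ᶠ ε in 𝓝[>] 0, ∃ l, (l, y₁ - ε) ∈ B ∧ (l + w, y₁ - ε) ∈ B := by
  have hpos : 0 < y₁ - y := sub_pos.2 hy
  have hlim : Tendsto (fun ε => (1 - ε / (y₁ - y)) * (x₂ - x₁)) (𝓝[>] 0) (𝓝 (x₂ - x₁)) := by
    refine Tendsto.mono_left ?_ nhdsWithin_le_nhds
    have hcont : Continuous fun ε => (1 - ε / (y₁ - y)) * (x₂ - x₁) := by fun_prop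
    convert hcont.tendsto 0 using 2
    ring
  filter_upwards [hlim.eventually_const_lt hw.2, Ioo_mem_nhdsGT hpos] with ε hlen ⟨hε0, hε⟩
  set t := ε / (y₁ - y) with ht_def
  have ht : t ∈ Set.Icc 0 1 := ⟨by positivity, (div_le_one hpos).2 hε.le⟩
  have hty : y₁ - ε = y₁ + t * (y - y₁) := by rw [ht_def]; field_simp; ring
  have hleft := mem_of_eq_add_mul_sub hB h₁ h ht rfl hty
  refine ⟨_, hleft, mem_of_mem_Icc hB hleft (mem_of_eq_add_mul_sub hB h₂ h ht rfl hty) ⟨?_, ?_⟩⟩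
  · linarith [hw.1]
  · linarith

end PlaneConvexity

/-- The vertices, in cyclic order, of the affinely regular hexagon contained in every `L a`. -/
def stdVertex : Fin 6 → ℝ × ℝ := ![(1, 1), (2, 2), (1, 3), (-1, 3), (-2, 2), (-1, 1)]

/-- `B` is convex and contains the standard hexagon, which maximises, among the hexagons in `B`
with vertices `(x₀ ± r, y₀)`, `(x₁ ± r, y₁)`, `(z ± 2 * r, (y₀ + y₁) / 2)`, the area of the
parallelogram spanned by the two short sides. -/
structure IsHorizontallyOptimal (B : Set (ℝ × ℝ)) : Prop where
  convex : Convex ℝ B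
  vertex_mem (k : Fin 6) : stdVertex k ∈ B
  area_le {x₀ y₀ x₁ y₁ z r : ℝ} (hr : 0 ≤ r) (hl₀ : (x₀ - r, y₀) ∈ B) (hr₀ : (x₀ + r, y₀) ∈ B)
    (hl₁ : (x₁ - r, y₁) ∈ B) (hr₁ : (x₁ + r, y₁) ∈ B) (hl : (z - 2 * r, (y₀ + y₁) / 2) ∈ B)
    (hr : (z + 2 * r, (y₀ + y₁) / 2) ∈ B) : r * (y₁ - y₀) ≤ 2

lemma hexVertex_eq_frameEquiv_comp {o u h : ℝ × ℝ} {r : ℝ} (hframe : cross (r • u) h ≠ 0)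
    (x₀ y₀ x₁ y₁ z ρ : ℝ) :
    hexVertex u (frameEquiv o (r • u) h hframe ((x₀ + x₁) / 2, (y₀ + y₁) / 2),
        ((x₁ - x₀) / 2) • r • u + ((y₁ - y₀) / 2) • h, r * ρ, r * (z - (x₀ + x₁) / 2)) =
      frameEquiv o (r • u) h hframe ∘ ![(x₀ + ρ, y₀), (z + 2 * ρ, (y₀ + y₁) / 2), (x₁ + ρ, y₁),
        (x₁ - ρ, y₁), (z - 2 * ρ, (y₀ + y₁) / 2), (x₀ - ρ, y₀)] := by
  ext1 k
  rw [Function.comp_apply, frameEquiv_apply]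
  fin_cases k <;> simp [hexVertex, frameEquiv_apply] <;> module

lemma exists_image_isHorizontallyOptimal {A : Set (ℝ × ℝ)} (hA : IsConvexBody A) :
    ∃ T : ℝ × ℝ ≃ᵃ[ℝ] ℝ × ℝ, IsHorizontallyOptimal (T '' A) := by
  obtain ⟨u, ⟨m, h, r, s⟩, hu, hopt, rfl : s = 0⟩ := exists_isOptimal_skew_eq_zero hA
  obtain ⟨hr : 0 < r, hcross : 0 < cross u h⟩ := hopt.pos hA.2.2 hu
  have hframe : cross (r • u) h ≠ 0 := by
    have hsmul := cross_smul_add_smul_left r 0 u h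
    rw [zero_smul, add_zero] at hsmul
    exact hsmul ▸ (mul_pos hr hcross).ne'
  let S := frameEquiv (m - (2 : ℝ) • h) (r • u) h hframe
  have hmem : ∀ p, p ∈ S.symm '' A ↔ S p ∈ A := fun p => by
    rw [← S.symm.coe_toEquiv, Equiv.image_eq_preimage_symm]; rfl
  refine ⟨S.symm, hA.1.affine_image S.symm.toAffineMap, fun k => (hmem _).2 ?_, ?_⟩
  · convert hopt.1.2 k
    rw [frameEquiv_apply]
    fin_cases k <;> simp [stdVertex, hexVertex] <;> module
  · intro x₀ y₀ x₁ y₁ z ρ hρ hl₀ hr₀ hl₁ hr₁ hl hr'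
    let c : HexConfig := (S ((x₀ + x₁) / 2, (y₀ + y₁) / 2),
      ((x₁ - x₀) / 2) • r • u + ((y₁ - y₀) / 2) • h, r * ρ, r * (z - (x₀ + x₁) / 2))
    have hc : IsInscribed A u c := by
      refine ⟨mul_nonneg hr.le hρ, fun k => ?_⟩
      rw [hmem] at hl₀ hr₀ hl₁ hr₁ hl hr'
      rw [hexVertex_eq_frameEquiv_comp]
      fin_cases k <;> assumption
    have harea : hexArea u c = r * cross u h / 2 * (ρ * (y₁ - y₀)) := by
      simp only [hexArea, halfWidth, halfHeight, c, cross_smul_add_smul_right, smul_smul]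
      ring
    have hle : r * cross u h / 2 * (ρ * (y₁ - y₀)) ≤ r * cross u h / 2 * 2 :=
      harea ▸ (hopt.2 c hc).trans_eq (by simp only [hexArea, halfWidth, halfHeight]; ring)
    exact le_of_mul_le_mul_left hle (by positivity)

/-- How far `p` lies beyond the line through `stdVertex (j - 1)` and `stdVertex j`, normalised to be
`-1` at the centre `(0, 2)` of the standard hexagon. -/
noncomputable def edgeExcess (j : Fin 6) (p : ℝ × ℝ) : ℝ :=
  ![1 - p.2, (p.1 - p.2) / 2, (p.1 + p.2 - 4) / 2, p.2 - 3, (p.2 - p.1 - 4) / 2,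
    (-p.1 - p.2) / 2] j

/-- `B` is convex and lies between the standard hexagon and the star formed by extending its
edges: no point of `B` lies strictly beyond two adjacent edges. -/
structure IsStarPosition (B : Set (ℝ × ℝ)) : Prop where
  convex : Convex ℝ B
  vertex_mem (k : Fin 6) : stdVertex k ∈ B
  edgeExcess_nonpos {p : ℝ × ℝ} (hp : p ∈ B) (j : Fin 6) (hj : 0 < edgeExcess j p) :
    edgeExcess (j + 1) p ≤ 0

namespace IsHorizontallyOptimal

variable {B : Set (ℝ × ℝ)} {x y : ℝ}

lemma reflect_fst (h : IsHorizontallyOptimal B) :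
    IsHorizontallyOptimal {p | (-p.1, p.2) ∈ B} where
  convex := h.convex.linear_preimage (LinearMap.prodMap (-LinearMap.id) LinearMap.id)
  vertex_mem k := by
    have hk : (-(stdVertex k).1, (stdVertex k).2) = stdVertex (5 - k) := by
      fin_cases k <;> simp [stdVertex]
    rw [Set.mem_ofPred_eq, hk]
    exact h.vertex_mem _
  area_le hr hl₀ hr₀ hl₁ hr₁ hl hr' := by
    simp only [Set.mem_ofPred_eq, neg_add', neg_sub', sub_neg_eq_add] at hl₀ hr₀ hl₁ hr₁ hl hr'
    exact h.area_le hr hr₀ hl₀ hr₁ hl₁ hr' hl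

lemma reflect_snd (h : IsHorizontallyOptimal B) :
    IsHorizontallyOptimal {p | (p.1, 4 - p.2) ∈ B} where
  convex := (h.convex.affine_preimage
    ((AffineMap.id ℝ ℝ).prodMap (AffineMap.const ℝ ℝ 4 - AffineMap.id ℝ ℝ)) :)
  vertex_mem k := by
    have hk : ((stdVertex k).1, 4 - (stdVertex k).2) = stdVertex (2 - k) := by
      fin_cases k <;> norm_num [stdVertex] <;> rfl
    rw [Set.mem_ofPred_eq, hk]
    exact h.vertex_mem _
  area_le {_ y₀ _ y₁ _ _} hr hl₀ hr₀ hl₁ hr₁ hl hr' := by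
    have hmid : 4 - (y₀ + y₁) / 2 = (4 - y₁ + (4 - y₀)) / 2 := by ring
    rw [Set.mem_ofPred_eq, hmid] at hl hr'
    linarith [h.area_le hr hl₁ hr₁ hl₀ hr₀ hl hr']

/-- Otherwise lowering the bottom side of the standard hexagon would increase the area. -/
lemma not_mem_chord_below (h : IsHorizontallyOptimal B) {l ε : ℝ} (hε : ε ∈ Set.Ioo 0 1)
    (hl : (l, 1 - ε) ∈ B) (hr : (l + 2, 1 - ε) ∈ B) : False := by
  obtain ⟨hε0, hε1⟩ := hε
  have htop : ∀ x ∈ Set.Icc (-1) 1, ((x, 3) : ℝ × ℝ) ∈ B := fun _ =>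
    mem_of_mem_Icc h.convex (h.vertex_mem 3) (h.vertex_mem 2)
  have ht : 1 - ε / 2 ∈ Set.Icc (0 : ℝ) 1 := ⟨by linarith, by linarith⟩
  have harea := h.area_le (x₀ := l + 1) (y₀ := 1 - ε) (x₁ := 0) (y₁ := 3) (z := 0) (r := 1 - ε / 4)
    (by linarith) (mem_of_mem_Icc h.convex hl hr ⟨by linarith, by linarith⟩)
    (mem_of_mem_Icc h.convex hl hr ⟨by linarith, by linarith⟩)
    (htop _ ⟨by linarith, by linarith⟩) (htop _ ⟨by linarith, by linarith⟩)
    (mem_of_eq_add_mul_sub h.convex (h.vertex_mem 5) (h.vertex_mem 4) ht (by ring) (by ring))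
    (mem_of_eq_add_mul_sub h.convex (h.vertex_mem 0) (h.vertex_mem 1) ht (by ring) (by ring))
  nlinarith

/-- Otherwise cutting off the bottom and the top would allow a larger area. -/
lemma le_two_of_mem (h : IsHorizontallyOptimal B) (hx : (x, 2) ∈ B) : x ≤ 2 := by
  by_contra! hlt
  set δ := x - 2 with hδ
  have hδ0 : 0 < δ := sub_pos.2 hlt
  set ε := δ / (4 + 2 * δ) with hε
  have hεδ : ε * (4 + 2 * δ) = δ := by rw [hε]; field_simp
  have hε0 : 0 < ε := by positivity
  have hε1 : ε < 1 := by rw [hε, div_lt_one] <;> linarith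
  have ht : ε ∈ Set.Icc (0 : ℝ) 1 := ⟨hε0.le, hε1.le⟩
  have hmid : ∀ z ∈ Set.Icc (-2) x, (z, (1 + ε + (3 - ε)) / 2) ∈ B := fun _ hz => by
    convert mem_of_mem_Icc h.convex (h.vertex_mem 4) hx hz using 2
    ring
  have harea := h.area_le (x₀ := ε * δ / 2) (y₀ := 1 + ε) (x₁ := ε * δ / 2) (y₁ := 3 - ε)
    (z := δ / 2) (r := 1 + ε + ε * δ / 2) (by positivity)
    (mem_of_eq_add_mul_sub h.convex (h.vertex_mem 5) (h.vertex_mem 4) ht (by ring) (by ring))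
    (mem_of_eq_add_mul_sub h.convex (h.vertex_mem 0) hx ht (by rw [hδ]; ring) (by ring))
    (mem_of_eq_add_mul_sub h.convex (h.vertex_mem 3) (h.vertex_mem 4) ht (by ring) (by ring))
    (mem_of_eq_add_mul_sub h.convex (h.vertex_mem 2) hx ht (by rw [hδ]; ring) (by ring))
    (hmid _ ⟨by linarith, by linarith⟩) (hmid _ ⟨by linarith, by linarith⟩)
  nlinarith

lemma le_of_lt_one (h : IsHorizontallyOptimal B) (hp : (x, y) ∈ B) (hy : y < 1) : x ≤ y := by
  by_contra! hlt
  have hpos : 0 < 2 - y := by linarith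
  set X := x + (1 - y) / (2 - y) * (2 - x) with hX
  have hX1 : X - 1 = (x - y) / (2 - y) := by rw [hX]; field_simp; ring
  have hX2 : 0 < X - 1 := hX1 ▸ div_pos (sub_pos.2 hlt) hpos
  have hXB : (X, 1) ∈ B := mem_of_eq_add_mul_sub h.convex hp (h.vertex_mem 1)
    ⟨div_nonneg (by linarith) hpos.le, (div_le_one hpos).2 (by linarith)⟩ hX (by field_simp; ring)
  obtain ⟨ε, ⟨l, hl, hr⟩, hε⟩ := ((exists_chord_below h.convex (h.vertex_mem 5) hXB hp hy
    (w := 2) ⟨by norm_num, by linarith⟩).and (Ioo_mem_nhdsGT zero_lt_one)).exists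
  exact h.not_mem_chord_below hε hl hr

lemma le_of_two_le (h : IsHorizontallyOptimal B) (hp : (x, y) ∈ B) (hy : 2 ≤ y) : x ≤ y := by
  by_contra! hlt
  have hpos : 0 < y - 1 := by linarith
  have htwo := h.le_two_of_mem <| mem_of_eq_add_mul_sub h.convex (h.vertex_mem 0) hp
    ⟨(div_pos one_pos hpos).le, (div_le_one hpos).2 (by linarith)⟩ rfl
    (by simp; field_simp; ring)
  have : 1 < 1 / (y - 1) * (x - 1) := by rw [one_div_mul_eq_div, lt_div_iff₀] <;> linarith
  linarith

lemma add_le_four_of_lt (h : IsHorizontallyOptimal B) (hp : (x, y) ∈ B) (hlt : y < x) :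
    x + y ≤ 4 := by
  rcases le_total 2 y with hy | hy
  · exact absurd (h.le_of_two_le hp hy) hlt.not_ge
  · linarith [h.reflect_snd.le_of_two_le (x := x) (y := 4 - y) (by simpa) (by linarith)]

theorem isStarPosition (h : IsHorizontallyOptimal B) : IsStarPosition B := by
  refine ⟨h.convex, h.vertex_mem, ?_⟩
  rintro ⟨x, y⟩ hp j
  have hX : (-x, y) ∈ {p : ℝ × ℝ | (-p.1, p.2) ∈ B} := by simpa
  have hY : (x, 4 - y) ∈ {p : ℝ × ℝ | (p.1, 4 - p.2) ∈ B} := by simpa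
  have hXY : (-x, 4 - y) ∈ {p : ℝ × ℝ | (-p.1, 4 - p.2) ∈ B} := by simpa
  have hbottom : y < 1 → x ≤ y ∧ -x ≤ y := fun hy =>
    ⟨h.le_of_lt_one hp hy, h.reflect_fst.le_of_lt_one hX hy⟩
  have htop : 3 < y → x ≤ 4 - y ∧ -x ≤ 4 - y := fun hy =>
    ⟨h.reflect_snd.le_of_lt_one hY (by linarith),
      h.reflect_snd.reflect_fst.le_of_lt_one hXY (by linarith)⟩
  have hright : y < x → x + y ≤ 4 := h.add_le_four_of_lt hp
  have hleft : y < -x → -x + y ≤ 4 := h.reflect_fst.add_le_four_of_lt hX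
  exact match j with
    | 0 => fun (hj : 0 < 1 - y) => show (x - y) / 2 ≤ 0 by linarith [hbottom (by linarith)]
    | 1 => fun (hj : 0 < (x - y) / 2) => show (x + y - 4) / 2 ≤ 0 by
      linarith [hright (by linarith)]
    | 2 => fun (hj : 0 < (x + y - 4) / 2) => show y - 3 ≤ 0 from
      sub_nonpos.2 <| not_lt.1 fun hy => by linarith [htop hy]
    | 3 => fun (hj : 0 < y - 3) => show (y - x - 4) / 2 ≤ 0 by linarith [htop (by linarith)]
    | 4 => fun (hj : 0 < (y - x - 4) / 2) => show (-x - y) / 2 ≤ 0 from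
      not_lt.1 fun hy => by linarith [hleft (by linarith)]
    | 5 => fun (hj : 0 < (-x - y) / 2) => show 1 - y ≤ 0 from
      sub_nonpos.2 <| not_lt.1 fun hy => by linarith [hbottom hy]

end IsHorizontallyOptimal

/-- The affine automorphism of order six permuting the vertices of the standard hexagon
cyclically. -/
noncomputable def hexRotation : ℝ × ℝ ≃ᵃ[ℝ] ℝ × ℝ :=
  frameEquiv (3, 1) (1 / 2, 1 / 2) (-3 / 2, 1 / 2) (by norm_num [cross])

lemma hexRotation_apply (p : ℝ × ℝ) :
    hexRotation p = (3 + (p.1 - 3 * p.2) / 2, 1 + (p.1 + p.2) / 2) := by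
  rw [hexRotation, frameEquiv_apply]
  ext <;> simp <;> ring

lemma hexRotation_stdVertex (k : Fin 6) : hexRotation (stdVertex k) = stdVertex (k + 1) := by
  rw [hexRotation_apply]
  fin_cases k <;> norm_num [stdVertex] <;> rfl

lemma edgeExcess_add_one_hexRotation (j : Fin 6) (p : ℝ × ℝ) :
    edgeExcess (j + 1) (hexRotation p) = edgeExcess j p := by
  rw [hexRotation_apply]
  fin_cases j <;> simp [edgeExcess] <;> ring

lemma continuous_edgeExcess (j : Fin 6) : Continuous (edgeExcess j) := by
  unfold edgeExcess
  fin_cases j <;> dsimp <;> fun_prop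

/-- No point of `B` lies further beyond any edge of the standard hexagon than some point of `B` lies
beyond edge `k`. -/
def IsDominantEdge (B : Set (ℝ × ℝ)) (k : Fin 6) : Prop :=
  ∃ p ∈ B, ∀ q ∈ B, ∀ j, edgeExcess j q ≤ edgeExcess k p

lemma exists_isDominantEdge {B : Set (ℝ × ℝ)} (hB : IsCompact B) (hne : B.Nonempty) :
    ∃ k, IsDominantEdge B k := by
  choose p hp hmax using fun j => hB.exists_isMaxOn hne (continuous_edgeExcess j).continuousOn
  obtain ⟨k, hk⟩ := Finite.exists_max fun j => edgeExcess j (p j)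
  exact ⟨k, p k, hp k, fun q hq j => (hmax j hq).trans (hk j)⟩

lemma IsDominantEdge.image_hexRotation {B : Set (ℝ × ℝ)} {k : Fin 6} (h : IsDominantEdge B k) :
    IsDominantEdge (hexRotation '' B) (k + 1) := by
  obtain ⟨p, hp, hmax⟩ := h
  refine ⟨_, Set.mem_image_of_mem _ hp, ?_⟩
  rintro _ ⟨q, hq, rfl⟩ j
  rw [← sub_add_cancel j 1, edgeExcess_add_one_hexRotation, edgeExcess_add_one_hexRotation]
  exact hmax q hq _

namespace IsStarPosition

variable {B : Set (ℝ × ℝ)}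

lemma image_hexRotation (h : IsStarPosition B) : IsStarPosition (hexRotation '' B) where
  convex := h.convex.affine_image hexRotation.toAffineMap
  vertex_mem k := by
    rw [← sub_add_cancel k 1, ← hexRotation_stdVertex]
    exact Set.mem_image_of_mem _ (h.vertex_mem _)
  edgeExcess_nonpos := by
    rintro _ ⟨p, hp, rfl⟩ j hj
    rw [edgeExcess_add_one_hexRotation]
    rw [← sub_add_cancel j 1, edgeExcess_add_one_hexRotation] at hj
    simpa using h.edgeExcess_nonpos hp _ hj

lemma exists_image_isDominantEdge_zero (h : IsStarPosition B) {k : Fin 6}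
    (hk : IsDominantEdge B k) :
    ∃ T : ℝ × ℝ ≃ᵃ[ℝ] ℝ × ℝ, IsStarPosition (T '' B) ∧ IsDominantEdge (T '' B) 0 := by
  have hpow : ∀ n : ℕ, ∃ T : ℝ × ℝ ≃ᵃ[ℝ] ℝ × ℝ,
      IsStarPosition (T '' B) ∧ IsDominantEdge (T '' B) (k + n • 1) := fun n => by
    induction n with
    | zero => exact ⟨AffineEquiv.refl ℝ _, by simpa using h, by simpa using hk⟩
    | succ n ih =>
      obtain ⟨T, hstar, hdom⟩ := ih
      refine ⟨T.trans hexRotation, ?_, ?_⟩ <;> rw [AffineEquiv.coe_trans, Set.image_comp]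
      · exact hstar.image_hexRotation
      · rw [succ_nsmul, ← add_assoc]
        exact hdom.image_hexRotation
  obtain ⟨n, hn⟩ : ∃ n : ℕ, k + n • 1 = 0 := ⟨6 - k, by fin_cases k <;> rfl⟩
  exact hn ▸ hpow n

variable {x y a x₀ : ℝ}

lemma abs_le_of_lt_one (h : IsStarPosition B) (hp : (x, y) ∈ B) (hy : y < 1) : |x| ≤ y := by
  have hbottom : 0 < edgeExcess 0 (x, y) := sub_pos.2 hy
  have hright : (x - y) / 2 ≤ 0 := h.edgeExcess_nonpos hp 0 hbottom
  have hleft : (-x - y) / 2 ≤ 0 := not_lt.1 fun hpos =>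
    (h.edgeExcess_nonpos hp 5 hpos).not_gt hbottom
  exact abs_le.2 ⟨by linarith, by linarith⟩

lemma abs_add_le_four_of_lt_abs (h : IsStarPosition B) (hp : (x, y) ∈ B) (hlt : y < |x|) :
    |x| + y ≤ 4 := by
  have hright : 0 < (x - y) / 2 → (x + y - 4) / 2 ≤ 0 := h.edgeExcess_nonpos hp 1
  have hleft : 0 < (y - x - 4) / 2 → (-x - y) / 2 ≤ 0 := h.edgeExcess_nonpos hp 4
  rcases abs_cases x with ⟨hx, -⟩ | ⟨hx, -⟩ <;> rw [hx] at hlt ⊢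
  · linarith [hright (by linarith)]
  · by_contra! hgt
    linarith [hleft (by linarith)]

lemma abs_add_le_four_of_three_lt (h : IsStarPosition B) (hp : (x, y) ∈ B) (hy : 3 < y) :
    |x| + y ≤ 4 := by
  have htop : 0 < edgeExcess 3 (x, y) := sub_pos.2 hy
  have hleft : (y - x - 4) / 2 ≤ 0 := h.edgeExcess_nonpos hp 3 htop
  have hright : (x + y - 4) / 2 ≤ 0 := not_lt.1 fun hpos =>
    (h.edgeExcess_nonpos hp 2 hpos).not_gt htop
  rcases abs_cases x with ⟨hx, -⟩ | ⟨hx, -⟩ <;> linarith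

/-- Otherwise the segment from `(x, 1)` to `(x₀, a)` leaves the star just below height `1`. -/
lemma abs_le_one_of_mem (h : IsStarPosition B) (hlow : (x₀, a) ∈ B) (ha : a < 1)
    (hx : (x, 1) ∈ B) : |x| ≤ 1 := by
  have hnear : ∀ᶠ t in 𝓝[>] (0 : ℝ), |x + t * (x₀ - x)| ≤ 1 + t * (a - 1) := by
    filter_upwards [Ioo_mem_nhdsGT one_pos] with t ht
    exact h.abs_le_of_lt_one (mem_of_eq_add_mul_sub h.convex hx hlow ⟨ht.1.le, ht.2.le⟩ rfl rfl)
      (by nlinarith [ht.1])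
  have hlim : ∀ f : ℝ → ℝ, Continuous f → Tendsto f (𝓝[>] 0) (𝓝 (f 0)) := fun f hf =>
    (hf.tendsto 0).mono_left nhdsWithin_le_nhds
  simpa using le_of_tendsto_of_tendsto (hlim _ (by fun_prop)) (hlim _ (by fun_prop)) hnear

/-- The bound says that `(x, y)` lies above the two lines from `(±1, 1)` to `(±(2 + a), 2 - a)`. -/
lemma one_sub_mul_abs_sub_one_le (h : IsStarPosition B) (hlow : (x₀, a) ∈ B) (ha : a < 1)
    (hp : (x, y) ∈ B) (hy : 1 ≤ y) : (1 - a) * (|x| - 1) ≤ (1 + a) * (y - 1) := by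
  have hx₀ := abs_le.1 (h.abs_le_of_lt_one hlow ha)
  have hpos : 0 < y - a := by linarith
  set t := (1 - a) / (y - a) with ht_def
  have hcross : (x₀ + t * (x - x₀), 1) ∈ B := mem_of_eq_add_mul_sub h.convex hlow hp
    ⟨div_nonneg (by linarith) hpos.le, (div_le_one hpos).2 (by linarith)⟩ rfl
    (by field_simp; ring)
  have hone := abs_le.1 (h.abs_le_one_of_mem hlow ha hcross)
  have hscale : (x₀ + t * (x - x₀)) * (y - a) = x₀ * (y - 1) + (1 - a) * x := by
    rw [ht_def]; field_simp; ring
  rcases abs_cases x with ⟨hx, -⟩ | ⟨hx, -⟩ <;> rw [hx] <;> nlinarith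

end IsStarPosition

section ContainmentInU

variable {a x y : ℝ}

lemma mem_U_of_lt_half (ha : 0 ≤ a) (ha' : a < 1 / 2) (hlow : a ≤ y) (hhigh : y ≤ 4 - a)
    (hbottom : y < 1 → |x| ≤ y) (htop : 3 < y → |x| + y ≤ 4) (hside : y < |x| → |x| + y ≤ 4)
    (hupper : |x| + y ≤ 6 - 2 * a) (htangent : 1 ≤ y → (1 - a) * (|x| - 1) ≤ (1 + a) * (y - 1)) :
    (x, y) ∈ U a := by
  rw [U, if_pos ha']
  rcases le_or_gt y (2 - a) with h₂ | h₂
  · refine mem_convexHull_of_mem_trapezoid a a (2 + a) (2 - a) (by linarith) ⟨hlow, h₂⟩ ?_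
    rcases lt_or_ge y 1 with h₁ | h₁
    · nlinarith [hbottom h₁]
    · nlinarith [htangent h₁]
  have hmid : |x| ≤ max y (4 - y) := by
    rcases le_or_gt |x| y with h | h
    · exact le_max_of_le_left h
    · exact le_max_of_le_right (by linarith [hside h])
  rcases le_or_gt y (3 - a) with h₃ | h₃
  · refine mem_convexHull_of_mem_trapezoid (2 + a) (2 - a) (3 - a) (3 - a) (by linarith)
      ⟨h₂.le, h₃⟩ ?_
    rcases le_max_iff.1 hmid with h | h <;> nlinarith
  rcases le_or_gt y 3 with h₄ | h₄
  · refine mem_convexHull_of_mem_trapezoid (3 - a) (3 - a) (3 - 2 * a) 3 (by linarith)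
      ⟨h₃.le, h₄⟩ ?_
    nlinarith
  · refine mem_convexHull_of_mem_trapezoid (3 - 2 * a) 3 a (4 - a) (by linarith) ⟨h₄.le, hhigh⟩ ?_
    nlinarith [htop h₄]

lemma mem_U_of_half_le (ha : 1 / 2 ≤ a) (hlow : a ≤ y) (hhigh : y ≤ 4 - a)
    (hbottom : y < 1 → |x| ≤ y) (htop : 3 < y → |x| + y ≤ 4) (hside : y < |x| → |x| + y ≤ 4)
    (hupper : |x| + y ≤ 6 - 2 * a) (hlower : |x| - y ≤ 2 - 2 * a) : (x, y) ∈ U a := by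
  rw [U, if_neg ha.not_gt]
  rcases lt_or_ge y 1 with h₁ | h₁
  · refine mem_convexHull_of_mem_trapezoid a a (3 - 2 * a) 1 (by linarith) ⟨hlow, h₁.le⟩ ?_
    nlinarith [hbottom h₁]
  rcases le_or_gt y (1 + a) with h₂ | h₂
  · refine mem_convexHull_of_mem_trapezoid (3 - 2 * a) 1 (3 - a) (1 + a) (by linarith) ⟨h₁, h₂⟩ ?_
    nlinarith
  rcases le_or_gt y (3 - a) with h₃ | h₃
  · refine mem_convexHull_of_mem_trapezoid (3 - a) (1 + a) (3 - a) (3 - a) (by linarith)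
      ⟨h₂.le, h₃⟩ ?_
    have hmid : |x| ≤ 3 - a := by
      rcases le_or_gt |x| y with h | h
      · linarith
      · linarith [hside h]
    nlinarith
  rcases le_or_gt y 3 with h₄ | h₄
  · refine mem_convexHull_of_mem_trapezoid (3 - a) (3 - a) (3 - 2 * a) 3 (by linarith)
      ⟨h₃.le, h₄⟩ ?_
    nlinarith
  · refine mem_convexHull_of_mem_trapezoid (3 - 2 * a) 3 a (4 - a) (by linarith) ⟨h₄.le, hhigh⟩ ?_
    nlinarith [htop h₄]

end ContainmentInU

section Sandwich

variable {B : Set (ℝ × ℝ)}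

lemma L_subset {a x₀ : ℝ} (hB : Convex ℝ B) (hvertex : ∀ k, stdVertex k ∈ B) (hx₀ : |x₀| ≤ a)
    (hlow : (x₀, a) ∈ B) : L a ⊆ B := by
  have ha : 0 ≤ a := (abs_nonneg _).trans hx₀
  have htip : ((0 : ℝ), 2 * a / (1 + a)) ∈ B := by
    have habs : |-x₀ / a| ≤ 1 := by
      rw [abs_div, abs_neg, abs_of_nonneg ha]
      exact div_le_one_of_le₀ hx₀ ha
    have hopposite : (-x₀ / a, 1) ∈ B :=
      mem_of_mem_Icc hB (hvertex 5) (hvertex 0) (abs_le.1 habs)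
    have hcancel : a * (-x₀ / a) = -x₀ :=
      mul_div_cancel_of_imp' fun h => by simpa [h] using hx₀
    refine mem_of_eq_add_mul_sub hB hlow hopposite (t := a / (1 + a))
      ⟨by positivity, (div_le_one (by linarith)).2 (by linarith)⟩ ?_ (by field_simp; ring)
    field_simp
    linear_combination -hcancel
  refine convexHull_min ?_ hB
  rintro _ (rfl | rfl | rfl | rfl | rfl | rfl | rfl)
  exacts [htip, hvertex 0, hvertex 5, hvertex 1, hvertex 4, hvertex 2, hvertex 3]

theorem IsStarPosition.exists_L_subset_subset_U (h : IsStarPosition B)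
    (hdom : IsDominantEdge B 0) : ∃ a ∈ Set.Icc (0 : ℝ) 1, L a ⊆ B ∧ B ⊆ U a := by
  obtain ⟨⟨x₀, a⟩, hlow, hmax⟩ := hdom
  have hbound : ∀ x y, (x, y) ∈ B →
      a ≤ y ∧ y ≤ 4 - a ∧ |x| + y ≤ 6 - 2 * a ∧ |x| - y ≤ 2 - 2 * a := fun x y hp => by
    have hbottom : 1 - y ≤ 1 - a := hmax _ hp 0
    have hlowerRight : (x - y) / 2 ≤ 1 - a := hmax _ hp 1
    have hupperRight : (x + y - 4) / 2 ≤ 1 - a := hmax _ hp 2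
    have htop : y - 3 ≤ 1 - a := hmax _ hp 3
    have hupperLeft : (y - x - 4) / 2 ≤ 1 - a := hmax _ hp 4
    have hlowerLeft : (-x - y) / 2 ≤ 1 - a := hmax _ hp 5
    refine ⟨by linarith, by linarith, ?_⟩
    rcases abs_cases x with ⟨hx, -⟩ | ⟨hx, -⟩ <;> rw [hx] <;> constructor <;> linarith
  have ha : a ≤ 1 := (hbound _ _ (h.vertex_mem 0)).1
  have hx₀ : |x₀| ≤ a := by
    rcases ha.lt_or_eq with ha | ha
    · exact h.abs_le_of_lt_one hlow ha
    · linarith [(hbound _ _ hlow).2.2.2]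
  refine ⟨a, ⟨(abs_nonneg _).trans hx₀, ha⟩, L_subset h.convex h.vertex_mem hx₀ hlow, ?_⟩
  rintro ⟨x, y⟩ hp
  obtain ⟨hlowest, hhighest, hupper, hlower⟩ := hbound x y hp
  rcases lt_or_ge a (1 / 2) with hhalf | hhalf
  · exact mem_U_of_lt_half ((abs_nonneg _).trans hx₀) hhalf hlowest hhighest
      (h.abs_le_of_lt_one hp) (h.abs_add_le_four_of_three_lt hp) (h.abs_add_le_four_of_lt_abs hp)
      hupper (h.one_sub_mul_abs_sub_one_le hlow (by linarith) hp)
  · exact mem_U_of_half_le hhalf hlowest hhighest (h.abs_le_of_lt_one hp)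
      (h.abs_add_le_four_of_three_lt hp) (h.abs_add_le_four_of_lt_abs hp) hupper hlower

end Sandwich

theorem stmt_2 (A : Set (ℝ × ℝ)) (hA : IsConvexBody A) :
    ∃ (a : ℝ) (T : ℝ × ℝ ≃ᵃ[ℝ] ℝ × ℝ),
      a ∈ Set.Icc (0 : ℝ) 1 ∧ L a ⊆ T '' A ∧ T '' A ⊆ U a := by
  obtain ⟨S, hS⟩ := exists_image_isHorizontallyOptimal hA
  have hcompact : IsCompact (S '' A) := hA.2.1.image S.continuous_of_finiteDimensional
  obtain ⟨k, hk⟩ := exists_isDominantEdge hcompact ⟨_, hS.vertex_mem 0⟩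
  obtain ⟨R, hR, hdom⟩ := hS.isStarPosition.exists_image_isDominantEdge_zero hk
  obtain ⟨a, ha, hL, hU⟩ := hR.exists_L_subset_subset_U hdom
  rw [← Set.image_comp, ← AffineEquiv.coe_trans] at hL hU
  exact ⟨a, S.trans R, ha, hL, hU⟩
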